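/- arXiv:1907.11476 — 2 statements merged into one kernel-verified Lean document; each statement's English description precedes it below -/
import Mathlib

section
/- Let N ≥ 1, let 2 ≤ q₁,…,q_N < ∞, let X = T_{q₁} × ⋯ × T_{q_N}, and let μ be a positive finite Borel measure on [-1,1]^N. Then the kernel ψ on X defined by ψ(x,y) = ∫_{[-1,1]^N} P_{d₁(x₁,y₁)}^{(q₁)}(t₁) ⋯ P_{d_N(x_N,y_N)}^{(q_N)}(t_N) dμ(t₁,…,t_N), where x = (x₁,…,x_N) and y = (y₁,…,y_N) and d_i is the edge-path distance on T_{q_i}, is positive definite on X. -/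
/-!
For fixed `t ∈ [-1, 1]` each kernel `K x y = treeP q (dist x y) t` on a homogeneous tree is positive
definite (`tree_posSemidef`). Products of such kernels over the factors of `X` are positive definite
by the Schur product theorem (`prod_posSemidef`), and integrating against the positive measure `μ`
preserves positive definiteness.

For a single tree, root it at an edge (`EdgeRooting`), so that every vertex `w` off the edge has a
parent `u` and a grandparent `g`. The three-term recurrence says that the formal vector `δ_w` has the
same `K`-inner product as its prediction `(1 + 1/q) t δ_u - (1/q) δ_g` with every vertex `y` that is
not farther out than `w` and is not a sibling of `w` (nor `w` itself) (`EdgeRooting.treeP_step`).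
Hence the residuals, the differences between the `δ_w` on the outermost sphere and their predictions,
are orthogonal to everything further in and to the residuals of non-siblings. Among the children of
one vertex, their Gram matrix is `(q + 1) (1 - t²) / q²` times `q I - J` with `J` the all-ones matrix
(`EdgeRooting.treeP_top`). A vertex has at most `q` children, so `q I - J` is positive semidefinite by
Cauchy–Schwarz (`residual_nonneg`). Removing one sphere after another (`EdgeRooting.form_nonneg`)
leaves the two ends of the root edge, with Gram matrix `[[1, t], [t, 1]]`.
-/

open MeasureTheory Filter Finset
open scoped ComplexOrder

/-- The polynomials `P_n^{(q)}`. -/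
noncomputable def treeP (q : ℕ) : ℕ → ℝ → ℝ
  | 0, _ => 1
  | 1, x => x
  | (n+2), x => (1 + 1/(q:ℝ)) * x * treeP q (n+1) x - (1/(q:ℝ)) * treeP q n x

/-- The polynomials `Q_n^{(q)}`. -/
noncomputable def treeQ (q : ℕ) : ℕ → ℝ → ℝ
  | 0, _ => 1
  | 1, x => (1 + 1/(q:ℝ)) * x
  | (n+2), x => (1 + 1/(q:ℝ)) * x * treeQ q (n+1) x - (1/(q:ℝ)) * treeQ q n x

/-- A kernel `ψ` on a set `X` is positive definite. -/
def IsPDKernel {X : Type*} (ψ : X → X → ℂ) : Prop :=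
  ∀ (n : ℕ) (x : Fin n → X) (z : Fin n → ℂ),
    0 ≤ ∑ i, ∑ j, ψ (x i) (x j) * (starRingEnd ℂ) (z i) * z j

/-- `G` is a `(q+1)`-homogeneous tree: connected, acyclic, every vertex has exactly
`q+1` neighbours. -/
def IsHomTree {V : Type} (G : SimpleGraph V) (q : ℕ) : Prop :=
  G.Connected ∧ G.IsAcyclic ∧ ∀ v : V, (G.neighborSet v).ncard = q + 1

/-- `G` is a homogeneous tree of countably infinite degree. -/
def IsInfTree {V : Type} (G : SimpleGraph V) : Prop :=
  G.Connected ∧ G.IsAcyclic ∧ ∀ v : V, (G.neighborSet v).Countable ∧ (G.neighborSet v).Infinite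

/-! ### Homogeneous trees rooted at an edge -/

theorem tree_exists_toward {V : Type} {G : SimpleGraph V} (hG : G.IsTree) (o x : V) (h : x ≠ o) :
    ∃ v, G.Adj x v ∧ G.dist o x = G.dist o v + 1 := by
  obtain ⟨p, hp⟩ := hG.connected.exists_walk_length_eq_dist x o
  cases p with
  | nil => exact absurd rfl h
  | @cons _ v _ hadj p =>
    refine ⟨v, hadj, ?_⟩
    have h1 := G.dist_le p
    have h2 := hG.dist_eq_dist_add_one_of_adj o hadj
    rw [SimpleGraph.Walk.length_cons] at hp
    rw [G.dist_comm (u := o) (v := x), G.dist_comm (u := o) (v := v)] at *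
    omega

/-- The neighbour of `x` on the way to `o` is unique. -/
theorem tree_unique_toward {V : Type} {G : SimpleGraph V} (hG : G.IsTree) {o x v w : V}
    (hv : G.Adj x v) (hw : G.Adj x w) (h1 : G.dist o x = G.dist o v + 1)
    (h2 : G.dist o x = G.dist o w + 1) : v = w := by
  have key : ∀ u, G.Adj x u → G.dist o x = G.dist o u + 1 →
      ∃ p : G.Walk o x, p.IsPath ∧ p.penultimate = u := by
    intro u hu h
    obtain ⟨p, hp⟩ := hG.connected.exists_walk_length_eq_dist o u
    refine ⟨p.concat hu.symm, ?_, by simp⟩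
    apply SimpleGraph.Walk.isPath_of_length_eq_dist
    rw [SimpleGraph.Walk.length_concat, hp, h]
  obtain ⟨p, hp, rfl⟩ := key v hv h1
  obtain ⟨p2, hp2, rfl⟩ := key w hw h2
  rw [(hG.existsUnique_path o x).unique hp hp2]

/-- If the edge `u — w` points away from `o` and towards `y`, then `w` lies on the geodesic
from `o` to `y`. -/
theorem tree_dist_through {V : Type} {G : SimpleGraph V} (hG : G.IsTree) (o y : V) :
    ∀ (n : ℕ) (u w : V), G.dist o u = n → G.Adj u w → G.dist o w = G.dist o u + 1 →
      G.dist y u = G.dist y w + 1 → G.dist o y = G.dist o w + G.dist w y := by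
  intro n
  induction n with
  | zero =>
    intro u w h0 _ h1 h2
    obtain rfl := hG.connected.dist_eq_zero_iff.1 h0
    rw [G.dist_comm (u := o) (v := y), h2, h1, h0, G.dist_comm (u := w) (v := y)]
    omega
  | succ n ih =>
    intro u w h0 hadj h1 h2
    obtain ⟨p, hp, hpo⟩ := tree_exists_toward hG o u
      (by rintro rfl; simp at h0)
    have hpw : p ≠ w := by rintro rfl; omega
    have hpy : G.dist y p = G.dist y u + 1 := by
      rcases hG.dist_eq_dist_add_one_of_adj y hp with h | h
      · exact absurd (tree_unique_toward hG hp hadj h h2) hpw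
      · exact h
    have := ih p u (by omega) hp.symm hpo hpy
    rw [G.dist_comm (u := u) (v := y)] at this
    rw [G.dist_comm (u := w) (v := y)]
    omega

/-- A rooting of a graph at an edge: `r` is the distance to that edge, `p` maps each vertex to the
neighbour nearer to the edge, and exchanges the two ends of the edge. -/
structure EdgeRooting {V : Type} (G : SimpleGraph V) (o : V) (r : V → ℕ) (p : V → V) : Prop where
  /-- `o` is one end of the root edge. -/
  r_root : r o = 0
  adj : ∀ x, G.Adj x (p x)
  r_p : ∀ x, r x ≠ 0 → r (p x) + 1 = r x
  r_p_zero : ∀ x, r x = 0 → r (p x) = 0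
  /-- The root edge has only two ends. -/
  eq_p : ∀ x y, r x = 0 → r y = 0 → y ≠ x → y = p x
  /-- A vertex `y` that is not farther out than `x ≠ y` is reached from `x` through the parent. -/
  dist_eq : ∀ x y, r x ≠ 0 → r y ≤ r x → y ≠ x → G.dist x y = G.dist (p x) y + 1

theorem exists_edgeRooting {V : Type} {G : SimpleGraph V} (hG : G.IsTree) (o o' : V)
    (hoo : G.Adj o o') : ∃ r p, EdgeRooting G o r p := by
  classical
  have hex : ∀ x, ∃ v, G.Adj x v ∧ (x ≠ o → G.dist o x = G.dist o v + 1) ∧ (x = o → v = o') := by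
    intro x
    by_cases h : x = o
    · exact ⟨o', h ▸ hoo, by simp [h], by simp⟩
    · obtain ⟨v, hv, hv'⟩ := tree_exists_toward hG o x h
      exact ⟨v, hv, fun _ => hv', by simp [h]⟩
  choose p hp hpo hpoo using hex
  have hone : G.dist o o' = 1 := SimpleGraph.dist_eq_one_iff_adj.2 hoo
  have hdiff : ∀ x, G.dist o x = G.dist o' x + 1 ∨ G.dist o' x = G.dist o x + 1 := by
    intro x
    have := hG.dist_eq_dist_add_one_of_adj x hoo
    rwa [G.dist_comm (u := x) (v := o), G.dist_comm (u := x) (v := o')] at this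
  have hz : ∀ x, min (G.dist o x) (G.dist o' x) = 0 ↔ x = o ∨ x = o' := by
    intro x
    have h1 := hG.connected.dist_eq_zero_iff (u := o) (v := x)
    have h2 := hG.connected.dist_eq_zero_iff (u := o') (v := x)
    rw [eq_comm (a := x), eq_comm (a := x), ← h1, ← h2]
    omega
  have hpo' : p o = o' := hpoo o rfl
  have hpo'' : p o' = o := by
    have := hpo o' hoo.ne'
    rw [hone] at this
    exact (hG.connected.dist_eq_zero_iff.1 (by omega)).symm
  -- Away from the edge, the neighbour nearer to one end is also the one nearer to the other.
  have hp2 : ∀ x, x ≠ o → x ≠ o' → G.dist o' x = G.dist o' (p x) + 1 := by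
    intro x hx hx'
    obtain ⟨v, hv, hv'⟩ := tree_exists_toward hG o' x hx'
    by_cases h : v = p x
    · rwa [← h]
    · have h1 := hpo x hx
      have h2 : G.dist o v = G.dist o x + 1 := by
        rcases hG.dist_eq_dist_add_one_of_adj o hv with h3 | h3
        · exact absurd (tree_unique_toward hG hv (hp x) h3 h1) h
        · exact h3
      have h4 := hG.dist_eq_dist_add_one_of_adj o' (hp x)
      have := hdiff x
      have := hdiff v
      have := hdiff (p x)
      omega
  refine ⟨fun x => min (G.dist o x) (G.dist o' x), p, by simp, hp, ?_, ?_, ?_, ?_⟩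
  · intro x hx
    rw [Ne, hz, not_or] at hx
    have := hpo x hx.1
    have := hp2 x hx.1 hx.2
    omega
  · intro x hx
    rw [hz] at hx ⊢
    rcases hx with rfl | rfl
    · exact Or.inr hpo'
    · exact Or.inl hpo''
  · intro x y hx hy hxy
    rw [hz] at hx hy
    rcases hx with rfl | rfl <;> rcases hy with rfl | rfl <;> simp_all
  · intro x y hx hy hxy
    rw [Ne, hz, not_or] at hx
    rcases hG.dist_eq_dist_add_one_of_adj y (hp x) with h | h
    · rw [G.dist_comm, h, G.dist_comm]
    · have h1 := tree_dist_through hG o y _ (p x) x rfl (hp x).symm (hpo x hx.1) h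
      have h2 := tree_dist_through hG o' y _ (p x) x rfl (hp x).symm (hp2 x hx.1 hx.2) h
      have h3 := hG.connected.pos_dist_of_ne hxy.symm
      omega

/-- Moving from `u` to its parent shortens the distance to every `y ≠ u` of rank at most `r u + 1`
that is not a child of `u`. -/
theorem EdgeRooting.dist_p {V : Type} {G : SimpleGraph V} {o : V} {r : V → ℕ} {p : V → V}
    (h : EdgeRooting G o r p) (u y : V) (hr : r y ≤ r u + 1) (hne : y ≠ u)
    (hc : r y ≤ r u ∨ p y ≠ u) : G.dist u y = G.dist (p u) y + 1 := by
  have base : ∀ z, z ≠ u → r z ≤ r u → G.dist u z = G.dist (p u) z + 1 := by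
    intro z hz hzr
    by_cases hu : r u = 0
    · rw [h.eq_p u z hu (by omega) hz, SimpleGraph.dist_self,
        SimpleGraph.dist_eq_one_iff_adj.2 (h.adj u)]
    · exact h.dist_eq u z hu hzr hz
  by_cases hle : r y ≤ r u
  · exact base y hne hle
  · have hpy : p y ≠ u := hc.resolve_left hle
    have hy0 : r y ≠ 0 := by omega
    have hry := h.r_p y hy0
    have hrpu : r (p u) ≤ r u := by
      by_cases hu : r u = 0
      · rw [h.r_p_zero u hu]; omega
      · have := h.r_p u hu; omega
    have h1 := h.dist_eq y u hy0 (by omega) hne.symm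
    have h2 := h.dist_eq y (p u) hy0 (by omega) (by rintro rfl; omega)
    have h3 := base (p y) hpy (by omega)
    rw [G.dist_comm (u := u) (v := y), G.dist_comm (u := p u) (v := y), h1, h2,
      G.dist_comm (u := p y) (v := u), G.dist_comm (u := p y) (v := p u), h3]

/-! ### One step of the induction: removing the outermost sphere -/

theorem sum_sum_indicator_eq {ι W : Type} [DecidableEq W] (s : Finset ι) (f : ι → W) (z : ι → ℝ) :
    ∑ i ∈ s, ∑ j ∈ s, z i * z j * (if f i = f j then 1 else 0) =
      ∑ w ∈ s.image f, (∑ i ∈ s with f i = w, z i) ^ 2 := by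
  have h1 : ∀ w, (∑ i ∈ s with f i = w, z i) ^ 2 =
      ∑ i ∈ s with f i = w, ∑ j ∈ s, z i * z j * (if f i = f j then 1 else 0) := by
    intro w
    rw [sq, Finset.sum_mul_sum]
    refine Finset.sum_congr rfl fun i hi => ?_
    rw [Finset.sum_filter]
    refine Finset.sum_congr rfl fun j _ => ?_
    rw [(Finset.mem_filter.1 hi).2]
    by_cases h : f j = w
    · simp [h]
    · simp [h, Ne.symm h]
  simp_rw [h1]
  exact (Finset.sum_fiberwise_of_maps_to (fun i hi => Finset.mem_image_of_mem f hi) _).symm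

/-- The kernel `q · [x = y] - [p x = p y]` is positive semidefinite on a set where the fibres of `p`
have at most `q` elements, by the Cauchy–Schwarz inequality on each fibre. -/
theorem residual_nonneg {ι V : Type} [DecidableEq V] (s : Finset ι) (x : ι → V) (z : ι → ℝ)
    (p : V → V) (q : ℕ) (hcard : ∀ u, #{v ∈ s.image x | p v = u} ≤ q) :
    0 ≤ ∑ i ∈ s, ∑ j ∈ s, z i * z j *
      ((q : ℝ) * (if x i = x j then 1 else 0) - (if p (x i) = p (x j) then 1 else 0)) := by
  have hsplit : ∑ i ∈ s, ∑ j ∈ s, z i * z j *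
      ((q : ℝ) * (if x i = x j then 1 else 0) - (if p (x i) = p (x j) then 1 else 0)) =
      q * ∑ i ∈ s, ∑ j ∈ s, z i * z j * (if x i = x j then 1 else 0) -
      ∑ i ∈ s, ∑ j ∈ s, z i * z j * (if p (x i) = p (x j) then 1 else 0) := by
    simp_rw [Finset.mul_sum, ← Finset.sum_sub_distrib]
    refine Finset.sum_congr rfl fun i _ => Finset.sum_congr rfl fun j _ => ?_
    ring
  rw [hsplit, sum_sum_indicator_eq s x z, sum_sum_indicator_eq s (fun i => p (x i)) z, sub_nonneg,
    ← Finset.sum_fiberwise_of_maps_to (s := s.image x) (t := s.image fun i => p (x i)) (g := p)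
      (by
        intro v hv
        obtain ⟨i, hi, rfl⟩ := Finset.mem_image.1 hv
        exact Finset.mem_image_of_mem (fun i => p (x i)) hi), Finset.mul_sum]
  refine Finset.sum_le_sum fun u _ => ?_
  have h1 : ∑ i ∈ s with p (x i) = u, z i =
      ∑ v ∈ s.image x with p v = u, ∑ i ∈ s with x i = v, z i := by
    rw [← Finset.sum_fiberwise_of_maps_to (s := s.filter fun i => p (x i) = u)
      (t := (s.image x).filter fun v => p v = u) (g := x)
      (by
        intro i hi
        rw [Finset.mem_filter] at hi ⊢
        exact ⟨Finset.mem_image_of_mem x hi.1, hi.2⟩)]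
    refine Finset.sum_congr rfl fun v hv => ?_
    rw [Finset.filter_filter]
    refine Finset.sum_congr ?_ fun _ _ => rfl
    ext i
    simp only [Finset.mem_filter] at hv ⊢
    constructor
    · rintro ⟨h, _, h'⟩; exact ⟨h, h'⟩
    · rintro ⟨h, rfl⟩; exact ⟨h, hv.2, rfl⟩
  rw [h1]
  refine sq_sum_le_card_mul_sum_sq.trans ?_
  exact mul_le_mul_of_nonneg_right (by exact_mod_cast hcard u)
    (Finset.sum_nonneg fun _ _ => sq_nonneg _)

/-- A vertex has at most `q` children, because one of its `q + 1` neighbours is its parent (or, for an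
end of the root edge, the other end). -/
theorem EdgeRooting.card_children_le {V : Type} {G : SimpleGraph V} {o : V} {r : V → ℕ} {p : V → V}
    (h : EdgeRooting G o r p) [DecidableEq V] (q : ℕ)
    (hdeg : ∀ v : V, (G.neighborSet v).ncard = q + 1) (T : Finset V) (hT : ∀ v ∈ T, r v ≠ 0) (u : V) :
    #{v ∈ T | p v = u} ≤ q := by
  have hfin : (G.neighborSet u).Finite := Set.finite_of_ncard_ne_zero (by rw [hdeg]; omega)
  have hnot : p u ∉ ({v ∈ T | p v = u} : Finset V) := by
    intro hm
    rw [Finset.mem_filter] at hm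
    have h1 := h.r_p _ (hT _ hm.1)
    rw [hm.2] at h1
    by_cases hu : r u = 0
    · exact hT _ hm.1 (h.r_p_zero u hu)
    · have := h.r_p u hu
      omega
  have hsub : ((insert (p u) ({v ∈ T | p v = u} : Finset V) : Finset V) : Set V) ⊆ G.neighborSet u := by
    intro v hv
    rw [Finset.mem_coe, Finset.mem_insert, Finset.mem_filter] at hv
    rw [SimpleGraph.mem_neighborSet]
    rcases hv with rfl | ⟨_, rfl⟩
    · exact h.adj u
    · exact (h.adj v).symm
  have h1 := Set.ncard_le_ncard hsub hfin
  rw [Set.ncard_coe_finset, Finset.card_insert_of_notMem hnot, hdeg] at h1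
  omega

/-- The three-term recurrence read off at a vertex `w`, with parent `p w` and grandparent `p (p w)`,
against any vertex `y` that is not farther out than `w` and is not a sibling of `w`. -/
theorem EdgeRooting.treeP_step {V : Type} {G : SimpleGraph V} {o : V} {r : V → ℕ} {p : V → V}
    (h : EdgeRooting G o r p) (q : ℕ) (t : ℝ) (w y : V) (hw : r w ≠ 0) (hy : r y ≤ r w)
    (hc : r y < r w ∨ p y ≠ p w) :
    treeP q (G.dist w y) t = (1 + 1 / (q : ℝ)) * t * treeP q (G.dist (p w) y) t -
      1 / (q : ℝ) * treeP q (G.dist (p (p w)) y) t := by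
  have hrw := h.r_p w hw
  by_cases hyu : y = p w
  · subst hyu
    rw [SimpleGraph.dist_eq_one_iff_adj.2 (h.adj w), SimpleGraph.dist_self,
      SimpleGraph.dist_eq_one_iff_adj.2 (h.adj (p w)).symm]
    simp only [treeP]
    ring
  · have hyw : y ≠ w := by
      rintro rfl
      simp at hc
    rw [h.dist_eq w y hw hy hyw, h.dist_p (p w) y (by omega) hyu (hc.imp_left (by omega))]
    simp only [treeP]

theorem EdgeRooting.dist_siblings {V : Type} {G : SimpleGraph V} {o : V} {r : V → ℕ} {p : V → V}
    (h : EdgeRooting G o r p) (w w' : V) (hw : r w ≠ 0) (hr : r w' = r w) (hp : p w = p w')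
    (hne : w ≠ w') : G.dist w w' = 2 := by
  rw [h.dist_eq w w' hw hr.le hne.symm, hp, SimpleGraph.dist_eq_one_iff_adj.2 (h.adj w').symm]

/-- The inner product of the predictions `(1 + 1/q) t δ_{p x} - (1/q) δ_{p (p x)}` of two vertices of
equal rank falls short of `treeP q (dist x y) t` by a multiple of the kernel of
`residual_nonneg`. -/
theorem EdgeRooting.treeP_top {V : Type} {G : SimpleGraph V} {o : V} {r : V → ℕ} {p : V → V}
    (h : EdgeRooting G o r p) [DecidableEq V] (q : ℕ) (hq : 2 ≤ q) (t : ℝ) (x y : V) (hx : r x ≠ 0)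
    (hy : r y = r x) :
    treeP q (G.dist x y) t =
      ((1 + 1 / (q : ℝ)) * t) * ((1 + 1 / (q : ℝ)) * t) * treeP q (G.dist (p x) (p y)) t +
      ((1 + 1 / (q : ℝ)) * t) * (-(1 / (q : ℝ))) * treeP q (G.dist (p x) (p (p y))) t +
      (-(1 / (q : ℝ))) * ((1 + 1 / (q : ℝ)) * t) * treeP q (G.dist (p (p x)) (p y)) t +
      (-(1 / (q : ℝ))) * (-(1 / (q : ℝ))) * treeP q (G.dist (p (p x)) (p (p y))) t +
      ((q : ℝ) + 1) * (1 - t ^ 2) / (q : ℝ) ^ 2 *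
        ((q : ℝ) * (if x = y then 1 else 0) - (if p x = p y then 1 else 0)) := by
  have hq0 : (q : ℝ) ≠ 0 := by
    have : q ≠ 0 := by omega
    exact_mod_cast this
  by_cases hp : p x = p y
  · have e1 : G.dist (p x) (p (p x)) = 1 := SimpleGraph.dist_eq_one_iff_adj.2 (h.adj _)
    have e2 : G.dist (p (p x)) (p x) = 1 := SimpleGraph.dist_eq_one_iff_adj.2 (h.adj _).symm
    rw [← hp, e1, e2, SimpleGraph.dist_self, SimpleGraph.dist_self]
    by_cases hxy : x = y
    · subst hxy
      simp only [SimpleGraph.dist_self, treeP, if_true]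
      field_simp
      ring
    · rw [h.dist_siblings x y hx hy hp hxy]
      simp only [treeP, if_neg hxy, if_true]
      field_simp
      ring
  · have hxy : x ≠ y := fun e => hp (by rw [e])
    have hy0 : r y ≠ 0 := by omega
    have hrx := h.r_p x hx
    have hrg : r (p (p x)) ≤ r (p x) := by
      by_cases h0 : r (p x) = 0
      · rw [h.r_p_zero _ h0]; omega
      · have := h.r_p _ h0; omega
    have s1 := h.treeP_step q t x y hx hy.le (Or.inr (Ne.symm hp))
    have s2 := h.treeP_step q t y (p x) hy0 (by omega) (Or.inl (by omega))
    have s3 := h.treeP_step q t y (p (p x)) hy0 (by omega) (Or.inl (by omega))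
    rw [G.dist_comm (u := y), G.dist_comm (u := p y), G.dist_comm (u := p (p y))] at s2 s3
    rw [s1, s2, s3, if_neg hxy, if_neg hp]
    ring

/-- The quadratic form of `treeP q (dist x y) t` is nonnegative on coefficients supported at distance
at most `n` from the root edge. The vertices `x i` need not be distinct, so replacing each outermost
`x i` by a combination of two vertices simply doubles the index type. -/
theorem EdgeRooting.form_nonneg {V : Type} {G : SimpleGraph V} {o : V} {r : V → ℕ} {p : V → V}
    (h : EdgeRooting G o r p) (q : ℕ) (hq : 2 ≤ q)
    (hdeg : ∀ v : V, (G.neighborSet v).ncard = q + 1) (t : ℝ) (ht : -1 ≤ t) (ht' : t ≤ 1) (n : ℕ) :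
    ∀ (ι : Type) [Fintype ι] (x : ι → V) (z : ι → ℝ), (∀ i, r (x i) ≤ n) →
      0 ≤ ∑ i, ∑ j, z i * z j * treeP q (G.dist (x i) (x j)) t := by
  classical
  induction n with
  | zero =>
    intro ι _ x z hx
    -- Only the two ends of the root edge occur, and `ε = ±1` tells them apart.
    set ε : V → ℝ := fun v => if v = o then 1 else -1 with hε
    have hK : ∀ i j, treeP q (G.dist (x i) (x j)) t =
        (1 + t) / 2 + (1 - t) / 2 * (ε (x i) * ε (x j)) := by
      intro i j
      have hi : r (x i) = 0 := by have := hx i; omega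
      have hj : r (x j) = 0 := by have := hx j; omega
      by_cases hij : x i = x j
      · rw [hij, SimpleGraph.dist_self]
        have : ε (x j) * ε (x j) = 1 := by simp only [hε]; split_ifs <;> norm_num
        rw [this]
        simp only [treeP]
        ring
      · have hadj : G.Adj (x i) (x j) := by
          rw [h.eq_p (x i) (x j) hi hj (Ne.symm hij)]
          exact h.adj _
        have : ε (x i) * ε (x j) = -1 := by
          simp only [hε]
          by_cases h1 : x i = o
          · have h2 : x j ≠ o := fun e => hij (h1.trans e.symm)
            simp [h1, h2]
          · by_cases h2 : x j = o
            · simp [h1, h2]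
            · exact absurd ((h.eq_p o _ h.r_root hi h1).trans (h.eq_p o _ h.r_root hj h2).symm) hij
        rw [SimpleGraph.dist_eq_one_iff_adj.2 hadj, this]
        simp only [treeP]
        ring
    have hsum : ∑ i, ∑ j, z i * z j * treeP q (G.dist (x i) (x j)) t =
        (1 + t) / 2 * (∑ i, z i) ^ 2 + (1 - t) / 2 * (∑ i, z i * ε (x i)) ^ 2 := by
      rw [sq, sq, Finset.sum_mul_sum, Finset.sum_mul_sum, Finset.mul_sum, Finset.mul_sum,
        ← Finset.sum_add_distrib]
      refine Finset.sum_congr rfl fun i _ => ?_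
      rw [Finset.mul_sum, Finset.mul_sum, ← Finset.sum_add_distrib]
      refine Finset.sum_congr rfl fun j _ => ?_
      rw [hK]
      ring
    rw [hsum]
    have h1 : 0 ≤ (1 + t) / 2 := by linarith
    have h2 : 0 ≤ (1 - t) / 2 := by linarith
    positivity
  | succ n ih =>
    intro ι _ x z hx
    -- Vertices of rank `n + 1` are replaced by their predictions, all others are kept.
    set A : V → ℝ := fun v => if r v = n + 1 then (1 + 1 / (q : ℝ)) * t else 1 with hA
    set B : V → ℝ := fun v => if r v = n + 1 then -(1 / (q : ℝ)) else 0 with hB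
    set U : V → V := fun v => if r v = n + 1 then p v else v with hU
    set W : V → V := fun v => if r v = n + 1 then p (p v) else v with hW
    set κ : ℝ := ((q : ℝ) + 1) * (1 - t ^ 2) / (q : ℝ) ^ 2 with hκ
    have hκ0 : 0 ≤ κ := by
      have : 0 ≤ 1 - t ^ 2 := by nlinarith
      positivity
    have hrg : ∀ v, r v = n + 1 → r (p v) = n ∧ r (p (p v)) ≤ n := by
      intro v hv
      have h1 := h.r_p v (by omega)
      refine ⟨by omega, ?_⟩
      by_cases h0 : r (p v) = 0
      · rw [h.r_p_zero _ h0]; omega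
      · have := h.r_p _ h0; omega
    have hI := ih (ι ⊕ ι) (Sum.elim (fun i => U (x i)) (fun i => W (x i)))
      (Sum.elim (fun i => z i * A (x i)) (fun i => z i * B (x i))) (by
        rintro (i | i)
        · simp only [Sum.elim_inl, hU]
          have := hx i
          split_ifs with h1
          · exact (hrg _ h1).1.le
          · omega
        · simp only [Sum.elim_inr, hW]
          have := hx i
          split_ifs with h1
          · exact (hrg _ h1).2
          · omega)
    have hR := residual_nonneg (Finset.univ.filter fun i => r (x i) = n + 1) x z p q (by
      refine h.card_children_le q hdeg _ ?_
      intro v hv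
      obtain ⟨i, hi, rfl⟩ := Finset.mem_image.1 hv
      rw [(Finset.mem_filter.1 hi).2]
      omega)
    have hK : ∀ i j, treeP q (G.dist (x i) (x j)) t =
        A (x i) * A (x j) * treeP q (G.dist (U (x i)) (U (x j))) t +
        A (x i) * B (x j) * treeP q (G.dist (U (x i)) (W (x j))) t +
        B (x i) * A (x j) * treeP q (G.dist (W (x i)) (U (x j))) t +
        B (x i) * B (x j) * treeP q (G.dist (W (x i)) (W (x j))) t +
        κ * (if r (x i) = n + 1 then if r (x j) = n + 1 then
          ((q : ℝ) * (if x i = x j then 1 else 0) - (if p (x i) = p (x j) then 1 else 0)) else 0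
          else 0) := by
      intro i j
      have hi := hx i
      have hj := hx j
      by_cases h1 : r (x i) = n + 1 <;> by_cases h2 : r (x j) = n + 1
      · simp only [hA, hB, hU, hW, if_pos h1, if_pos h2]
        exact h.treeP_top q hq t (x i) (x j) (by omega) (by omega)
      · simp only [hA, hB, hU, hW, if_pos h1, if_neg h2]
        rw [h.treeP_step q t (x i) (x j) (by omega) (by omega) (Or.inl (by omega))]
        ring
      · simp only [hA, hB, hU, hW, if_neg h1, if_pos h2]
        have := h.treeP_step q t (x j) (x i) (by omega) (by omega) (Or.inl (by omega))
        rw [G.dist_comm (u := x j), G.dist_comm (u := p (x j)),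
          G.dist_comm (u := p (p (x j)))] at this
        rw [this]
        ring
      · simp only [hA, hB, hU, hW, if_neg h1, if_neg h2]
        ring
    have hRsum : ∑ i with r (x i) = n + 1, ∑ j with r (x j) = n + 1, z i * z j *
        ((q : ℝ) * (if x i = x j then 1 else 0) - (if p (x i) = p (x j) then 1 else 0)) =
        ∑ i, ∑ j, z i * z j * (if r (x i) = n + 1 then if r (x j) = n + 1 then
          ((q : ℝ) * (if x i = x j then 1 else 0) - (if p (x i) = p (x j) then 1 else 0)) else 0
          else 0) := by
      rw [Finset.sum_filter]
      refine Finset.sum_congr rfl fun i _ => ?_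
      by_cases h1 : r (x i) = n + 1
      · simp only [if_pos h1, Finset.sum_filter, mul_ite, mul_zero]
      · simp only [if_neg h1, mul_zero, Finset.sum_const_zero]
    rw [hRsum] at hR
    refine (add_nonneg hI (mul_nonneg hκ0 hR)).trans_eq ?_
    simp only [Fintype.sum_sum_type, Sum.elim_inl, Sum.elim_inr, Finset.mul_sum,
      ← Finset.sum_add_distrib]
    refine Finset.sum_congr rfl fun i _ => Finset.sum_congr rfl fun j _ => ?_
    rw [hK i j]
    ring

/-! ### Passage to complex coefficients, products and integrals -/

/-- For `t ∈ [-1, 1]` the kernel `treeP q (dist x y) t` on a homogeneous tree is positive definite. -/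
theorem tree_posSemidef {V : Type} {G : SimpleGraph V} {q : ℕ} (hq : 2 ≤ q) (hG : IsHomTree G q)
    {t : ℝ} (ht : t ∈ Set.Icc (-1 : ℝ) 1) {n : ℕ} (x : Fin n → V) :
    (Matrix.of fun i j => ((treeP q (G.dist (x i) (x j)) t : ℝ) : ℂ)).PosSemidef := by
  obtain ⟨hconn, hacyc, hdeg⟩ := hG
  have hT : G.IsTree := ⟨hconn, hacyc⟩
  obtain ⟨o⟩ := hconn.nonempty
  obtain ⟨o', ho'⟩ : (G.neighborSet o).Nonempty :=
    Set.nonempty_of_ncard_ne_zero (by rw [hdeg]; omega)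
  obtain ⟨r, p, h⟩ := exists_edgeRooting hT o o' ho'
  have hreal : (Matrix.of fun i j => treeP q (G.dist (x i) (x j)) t).PosSemidef := by
    refine Matrix.PosSemidef.of_dotProduct_mulVec_nonneg ?_ fun z => ?_
    · ext i j
      simp [G.dist_comm]
    · refine (h.form_nonneg q hq hdeg t ht.1 ht.2 (∑ i, r (x i)) (Fin n) x z fun i =>
        Finset.single_le_sum (f := fun i => r (x i)) (fun _ _ => Nat.zero_le _)
          (Finset.mem_univ i)).trans_eq ?_
      simp only [dotProduct, Matrix.mulVec, Matrix.of_apply, Finset.mul_sum, star_trivial]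
      refine Finset.sum_congr rfl fun i _ => Finset.sum_congr rfl fun j _ => ?_
      ring
  -- A real decomposition into rank-one matrices is also a complex one.
  obtain ⟨m, v, hv⟩ := Matrix.posSemidef_iff_eq_sum_vecMulVec.1 hreal
  have hC : (Matrix.of fun i j => ((treeP q (G.dist (x i) (x j)) t : ℝ) : ℂ)) =
      ∑ k, Matrix.vecMulVec (fun i => (v k i : ℂ)) (star fun i => (v k i : ℂ)) := by
    ext i j
    have := congrFun (congrFun hv i) j
    simp only [Matrix.of_apply, Matrix.sum_apply, Matrix.vecMulVec_apply, Pi.star_apply,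
      star_trivial] at this ⊢
    rw [this]
    simp
  rw [hC]
  exact Matrix.posSemidef_sum _ fun k _ => Matrix.posSemidef_vecMulVec_self_star _

/-- The Schur product theorem for finitely many factors. -/
theorem prod_posSemidef {κ : Type} (s : Finset κ) {n : ℕ} (M : κ → Matrix (Fin n) (Fin n) ℂ)
    (hM : ∀ k, (M k).PosSemidef) : (Matrix.of fun i j => ∏ k ∈ s, M k i j).PosSemidef := by
  classical
  induction s using Finset.induction_on with
  | empty =>
    convert Matrix.posSemidef_vecMulVec_self_star (fun _ : Fin n => (1 : ℂ)) using 1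
    ext i j
    simp [Matrix.vecMulVec]
  | insert a s ha ih =>
    have he : (Matrix.of fun i j => ∏ k ∈ insert a s, M k i j) =
        (M a).hadamard (Matrix.of fun i j => ∏ k ∈ s, M k i j) := by
      ext i j
      simp [Finset.prod_insert ha]
    rw [he]
    exact (hM a).hadamard ih

theorem treeP_continuous (q n : ℕ) : Continuous (treeP q n) := by
  induction n using Nat.twoStepInduction with
  | zero =>
    have : treeP q 0 = fun _ => 1 := by ext; simp only [treeP]
    rw [this]
    fun_prop
  | one =>
    have : treeP q 1 = fun x => x := by ext; simp only [treeP]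
    rw [this]
    fun_prop
  | more n h0 h1 =>
    have : treeP q (n + 2) = fun x => (1 + 1 / (q : ℝ)) * x * treeP q (n + 1) x -
        1 / (q : ℝ) * treeP q n x := by ext; simp only [treeP]
    rw [this]
    fun_prop


theorem stmt_15 (N : ℕ) (hN : 1 ≤ N) (q : Fin N → ℕ) (hq : ∀ i, 2 ≤ q i)
    (V : Fin N → Type) (G : ∀ i, SimpleGraph (V i))
    (hG : ∀ i, IsHomTree (G i) (q i))
    (μ : Measure (Fin N → Set.Icc (-1 : ℝ) 1)) [IsFiniteMeasure μ] :
    IsPDKernel (fun x y : (∀ i, V i) =>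
      ∫ t, ∏ i, ((treeP (q i) ((G i).dist (x i) (y i)) (t i : ℝ) : ℝ) : ℂ) ∂μ) := by
  intro n x z
  have hint : ∀ i j, Integrable (fun t : Fin N → Set.Icc (-1 : ℝ) 1 =>
      ∏ k, ((treeP (q k) ((G k).dist (x i k) (x j k)) (t k : ℝ) : ℝ) : ℂ)) μ := by
    intro i j
    have hc : Continuous (fun t : Fin N → Set.Icc (-1 : ℝ) 1 =>
        ∏ k, ((treeP (q k) ((G k).dist (x i k) (x j k)) (t k : ℝ) : ℝ) : ℂ)) := by
      refine continuous_finsetProd _ fun k _ => Complex.continuous_ofReal.comp ?_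
      exact (treeP_continuous _ _).comp (continuous_subtype_val.comp (continuous_apply k))
    exact hc.integrable_of_hasCompactSupport (HasCompactSupport.of_compactSpace _)
  have hsum : ∑ i, ∑ j,
      (∫ t, ∏ k, ((treeP (q k) ((G k).dist (x i k) (x j k)) (t k : ℝ) : ℝ) : ℂ) ∂μ) *
      (starRingEnd ℂ) (z i) * z j =
      ∫ t, ∑ i, ∑ j, (∏ k, ((treeP (q k) ((G k).dist (x i k) (x j k)) (t k : ℝ) : ℝ) : ℂ)) *
        (starRingEnd ℂ) (z i) * z j ∂μ := by
    rw [integral_finsetSum _ fun i _ => integrable_finsetSum _ fun j _ =>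
      ((hint i j).mul_const _).mul_const _]
    refine Finset.sum_congr rfl fun i _ => ?_
    rw [integral_finsetSum _ fun j _ => ((hint i j).mul_const _).mul_const _]
    refine Finset.sum_congr rfl fun j _ => ?_
    rw [integral_mul_const, integral_mul_const]
  refine le_of_le_of_eq ?_ hsum.symm
  refine integral_nonneg fun t => ?_
  have hpsd := prod_posSemidef Finset.univ
    (fun k => Matrix.of fun i j => ((treeP (q k) ((G k).dist (x i k) (x j k)) (t k : ℝ) : ℝ) : ℂ))
    (fun k => tree_posSemidef (hq k) (hG k) (t k).2 fun i => x i k)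
  refine (hpsd.dotProduct_mulVec_nonneg z).trans_eq ?_
  simp only [dotProduct, Matrix.mulVec, Matrix.of_apply, Finset.mul_sum, Pi.star_apply,
    starRingEnd_apply]
  refine Finset.sum_congr rfl fun i _ => Finset.sum_congr rfl fun j _ => ?_
  ring
end

section
/- Let X be a median graph. Then the edge-path distance d on X is a conditionally negative kernel on the vertex set of X. -/
/-!
The proof uses the halfspaces `W(a,b) = {v | d(v,a) < d(v,b)}`, `a ~ b`.  The distance `d(x,y)` is the number of
halfspaces containing `x` but not `y` (`exists_separating_finset`), so on finitely many points it is
a finite sum of kernels `1_H(x) (1 - 1_H(y))`; for weights of total mass zero such a kernel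
contributes `-(∑ λᵢ 1_H(xᵢ))² ≤ 0`.

The count rests on the fact that an edge `c ~ d` leaving `W(a,b)` satisfies `W(c,d) = W(a,b)`
(`halfspace_eq_of_crossing`).  It is proved by moving the edge `cd` towards `ab` through a chain of
squares, found with medians.  Opposite edges of a square define the same halfspace
(`halfspace_subset_of_square`), as otherwise a median would produce a `K_{2,3}`, in which
three vertices have two medians.
-/

open MeasureTheory Filter Finset
open scoped ComplexOrder

/-- `G` is a median graph: connected, and for all vertices `x y z` the triple
intersection of intervals `I(x,y) ∩ I(y,z) ∩ I(z,x)` has exactly one element. -/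
def IsMedianGraph {V : Type} (G : SimpleGraph V) : Prop :=
  G.Connected ∧ ∀ x y z : V, ∃! u : V,
    (G.dist x y = G.dist x u + G.dist u y ∧
     G.dist y z = G.dist y u + G.dist u z ∧
     G.dist z x = G.dist z u + G.dist u x)

/-- The halfspace of vertices strictly closer to `a` than to `b`; used for adjacent `a`, `b`. -/
def halfspace {V : Type} (G : SimpleGraph V) (a b : V) : Set V :=
  {v | G.dist v a < G.dist v b}

/-- The last step of a geodesic from `x` to `y`. -/
lemma exists_adj_dist_pred {V : Type} {G : SimpleGraph V} (hG : G.Connected) {x y : V} {n : ℕ}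
    (h : G.dist x y = n + 1) : ∃ z, G.Adj z y ∧ G.dist x z = n := by
  obtain ⟨p, hp⟩ := hG.exists_walk_length_eq_dist y x
  rw [G.dist_comm, h] at hp
  cases p with
  | nil => simp at hp
  | @cons _ z _ hyz q =>
    refine ⟨z, hyz.symm, ?_⟩
    have h1 := SimpleGraph.dist_le q
    have h2 := hG.dist_triangle (u := x) (v := z) (w := y)
    have h3 : G.dist z y = 1 := SimpleGraph.dist_eq_one_iff_adj.2 hyz.symm
    rw [G.dist_comm] at h1
    simp only [SimpleGraph.Walk.length_cons] at hp
    omega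

/-- Median graphs are bipartite: the distances from a vertex to the two ends of an edge differ by
exactly one. -/
lemma IsMedianGraph.dist_edge {V : Type} {G : SimpleGraph V} (hG : IsMedianGraph G) {a b : V}
    (h : G.Adj a b) (v : V) :
    G.dist v b = G.dist v a + 1 ∨ G.dist v a = G.dist v b + 1 := by
  have hab : G.dist a b = 1 := SimpleGraph.dist_eq_one_iff_adj.2 h
  obtain ⟨u, ⟨h1, h2, h3⟩, -⟩ := hG.2 v a b
  have e1 := G.dist_comm (u := a) (v := u)
  have e2 := G.dist_comm (u := b) (v := u)
  have e3 := G.dist_comm (u := b) (v := v)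
  have e4 := G.dist_comm (u := u) (v := v)
  omega

lemma IsMedianGraph.dist_two {V : Type} {G : SimpleGraph V} (hG : IsMedianGraph G) {a m b : V}
    (h1 : G.Adj a m) (h2 : G.Adj m b) (hne : a ≠ b) : G.dist a b = 2 := by
  have h3 := hG.dist_edge h2 a
  have h4 : G.dist a m = 1 := SimpleGraph.dist_eq_one_iff_adj.2 h1
  have h5 := hG.1.pos_dist_of_ne hne
  omega

/-- The quadrangle condition: two vertices `c`, `d` with a common neighbour and at the same
distance from `v` have a common neighbour one step closer to `v`. -/
lemma IsMedianGraph.quadrangle {V : Type} {G : SimpleGraph V} (hG : IsMedianGraph G) {c m d : V}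
    (h1 : G.Adj c m) (h2 : G.Adj m d) (hne : c ≠ d) (v : V) (hv : G.dist v c = G.dist v d) :
    ∃ u, G.Adj c u ∧ G.Adj u d ∧ G.dist v c = G.dist v u + 1 := by
  have hcd := hG.dist_two h1 h2 hne
  obtain ⟨u, ⟨e1, e2, e3⟩, -⟩ := hG.2 v c d
  have f1 := G.dist_comm (u := d) (v := v)
  have f2 := G.dist_comm (u := d) (v := u)
  have f3 := G.dist_comm (u := u) (v := v)
  have f4 := G.dist_comm (u := c) (v := u)
  exact ⟨u, SimpleGraph.dist_eq_one_iff_adj.1 (by omega),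
    SimpleGraph.dist_eq_one_iff_adj.1 (by omega), by omega⟩

/-- A median graph contains no `K_{2,3}`. -/
lemma IsMedianGraph.no_K23 {V : Type} {G : SimpleGraph V} (hG : IsMedianGraph G) {p q x y z : V}
    (hpq : p ≠ q) (hxy : x ≠ y) (hyz : y ≠ z) (hzx : z ≠ x)
    (px : G.Adj p x) (py : G.Adj p y) (pz : G.Adj p z)
    (qx : G.Adj q x) (qy : G.Adj q y) (qz : G.Adj q z) : False := by
  have key : ∀ {r : V}, G.Adj r x → G.Adj r y → G.Adj r z →
      (G.dist x y = G.dist x r + G.dist r y ∧ G.dist y z = G.dist y r + G.dist r z ∧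
        G.dist z x = G.dist z r + G.dist r x) := by
    intro r rx ry rz
    rw [hG.dist_two rx.symm ry hxy, hG.dist_two ry.symm rz hyz, hG.dist_two rz.symm rx hzx,
      SimpleGraph.dist_eq_one_iff_adj.2 rx, SimpleGraph.dist_eq_one_iff_adj.2 ry,
      SimpleGraph.dist_eq_one_iff_adj.2 rz, SimpleGraph.dist_eq_one_iff_adj.2 rx.symm,
      SimpleGraph.dist_eq_one_iff_adj.2 ry.symm, SimpleGraph.dist_eq_one_iff_adj.2 rz.symm]
    simp
  exact hpq ((hG.2 x y z).unique (key px py pz) (key qx qy qz))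

/-- In a square `c d d' c'`, the halfspaces of the opposite edges `cd` and `c'd'` are nested (hence
equal, by symmetry). -/
lemma IsMedianGraph.halfspace_subset_of_square {V : Type} {G : SimpleGraph V}
    (hG : IsMedianGraph G) {c d c' d' : V} (hcd : G.Adj c d) (hdd : G.Adj d d')
    (hcc : G.Adj c c') (hcd' : G.Adj c' d') (h1 : c ≠ d') (h2 : d ≠ c') :
    halfspace G c d ⊆ halfspace G c' d' := by
  intro v hv
  simp only [halfspace, Set.mem_ofPred_eq] at hv ⊢
  by_contra hlt
  have e1 := hG.dist_edge hcd v
  have e2 := hG.dist_edge hdd v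
  have e4 := hG.dist_edge hcd' v
  have e3 := hG.dist_edge hcc v
  -- Here `c`, `d'` are at some distance `j` from `v`, and `d`, `c'` at distance `j + 1`.
  obtain ⟨u, hu1, hu2, hu3⟩ := hG.quadrangle hcd hdd h1 v (by omega)
  refine hG.no_K23 h1 h2 (z := u) ?_ ?_ hcd hcc hu1 hdd.symm hcd'.symm hu2.symm
  · rintro rfl; omega
  · rintro rfl; omega

/-- An edge `cd` leaving the halfspace of `ab` defines the same halfspace. The induction is on the
distance `k` from `c` to `a`, which also is the distance from `d` to `b`. -/
lemma IsMedianGraph.halfspace_eq_of_crossing {V : Type} {G : SimpleGraph V}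
    (hG : IsMedianGraph G) {a b : V} (hab : G.Adj a b) (k : ℕ) :
    ∀ {c d : V}, G.Adj c d → c ∈ halfspace G a b → d ∉ halfspace G a b → G.dist a c = k →
      halfspace G c d = halfspace G a b := by
  induction k with
  | zero =>
    intro c d hcd hc hd hk
    simp only [halfspace, Set.mem_ofPred_eq] at hc hd
    have e1 := hG.dist_edge hab d
    have e2 := hG.dist_edge hcd b
    have e3 := hG.dist_edge hcd a
    rw [G.dist_comm (u := d) (v := a), G.dist_comm (u := d) (v := b)] at e1 hd
    have hac : a = c := hG.1.dist_eq_zero_iff.1 hk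
    have hbd : b = d := hG.1.dist_eq_zero_iff.1 (by omega)
    rw [hac, hbd]
  | succ k ih =>
    intro c d hcd hc hd hk
    have hc0 := hc
    simp only [halfspace, Set.mem_ofPred_eq] at hc hd
    have e1 := hG.dist_edge hab d
    have e2 := hG.dist_edge hcd b
    have e3 := hG.dist_edge hcd a
    have e4 := hG.dist_edge hab c
    rw [G.dist_comm (u := d) (v := a), G.dist_comm (u := d) (v := b)] at e1 hd
    rw [G.dist_comm (u := c) (v := a), G.dist_comm (u := c) (v := b)] at e4 hc
    have hbd : G.dist b d = k + 1 := by omega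
    have hbc : G.dist b c = k + 2 := by omega
    have had : G.dist a d = k + 2 := by omega
    -- `d'` is the next vertex on a geodesic from `d` to `b`.
    obtain ⟨d', hd'd, hd'b⟩ : ∃ d', G.Adj d' d ∧ G.dist b d' = k := exists_adj_dist_pred hG.1 hbd
    have f1 := hG.dist_edge hab d'
    have f2 := hG.dist_edge hd'd a
    rw [G.dist_comm (u := d') (v := a), G.dist_comm (u := d') (v := b)] at f1
    have had' : G.dist a d' = k + 1 := by omega
    have hne : c ≠ d' := by rintro rfl; omega
    obtain ⟨c', h1, h2, h3⟩ := hG.quadrangle hcd hd'd.symm hne a (by omega)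
    have f3 := hG.dist_edge h1 b
    have f4 := hG.dist_edge h2 b
    have hne' : d ≠ c' := by rintro rfl; omega
    rw [← ih h2 (c := c') (d := d') ?_ ?_ (by omega)]
    · exact Set.Subset.antisymm
        (hG.halfspace_subset_of_square hcd hd'd.symm h1 h2 hne hne')
        (hG.halfspace_subset_of_square h2 hd'd h1.symm hcd hne'.symm hne.symm)
    · simp only [halfspace, Set.mem_ofPred_eq]
      rw [G.dist_comm (u := c') (v := a), G.dist_comm (u := c') (v := b)]
      omega
    · simp only [halfspace, Set.mem_ofPred_eq]
      rw [G.dist_comm (u := d') (v := a), G.dist_comm (u := d') (v := b)]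
      omega

/-- The distance from `x` to `y` is the number of halfspaces containing `x` but not `y`. -/
lemma IsMedianGraph.exists_separating_finset {V : Type} {G : SimpleGraph V}
    (hG : IsMedianGraph G) (x : V) (n : ℕ) : ∀ y : V, G.dist x y = n →
    ∃ F : Finset (Set V), F.card = n ∧
      ∀ H, H ∈ F ↔ (∃ a b, G.Adj a b ∧ H = halfspace G a b) ∧ x ∈ H ∧ y ∉ H := by
  classical
  induction n with
  | zero =>
    intro y hy
    obtain rfl : x = y := hG.1.dist_eq_zero_iff.1 hy
    exact ⟨∅, rfl, fun H => by simp⟩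
  | succ n ih =>
    intro y hy
    obtain ⟨z, hzy, hz⟩ := exists_adj_dist_pred hG.1 hy
    obtain ⟨F, hF, hmem⟩ := ih z hz
    have hzmem : z ∈ halfspace G z y := by
      simp [halfspace, SimpleGraph.dist_eq_one_iff_adj.2 hzy]
    refine ⟨insert (halfspace G z y) F, ?_, ?_⟩
    · rw [Finset.card_insert_of_notMem, hF]
      intro h
      exact ((hmem _).1 h).2.2 hzmem
    · intro H
      rw [Finset.mem_insert, hmem]
      constructor
      · rintro (rfl | ⟨⟨a, b, hab, rfl⟩, hx, hzH⟩)
        · refine ⟨⟨z, y, hzy, rfl⟩, ?_, ?_⟩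
          · simp only [halfspace, Set.mem_ofPred_eq]; omega
          · simp [halfspace]
        · refine ⟨⟨a, b, hab, rfl⟩, hx, fun hyH => ?_⟩
          -- Otherwise the edge from `y` to `z` leaves `H`, so `x` is closer to `y` than to `z`.
          rw [← hG.halfspace_eq_of_crossing hab _ hzy.symm hyH hzH rfl] at hx
          simp only [halfspace, Set.mem_ofPred_eq] at hx
          omega
      · rintro ⟨⟨a, b, hab, rfl⟩, hx, hyH⟩
        by_cases hzH : z ∈ halfspace G a b
        · exact Or.inl (hG.halfspace_eq_of_crossing hab _ hzy hzH hyH rfl).symm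
        · exact Or.inr ⟨⟨a, b, hab, rfl⟩, hx, hzH⟩

theorem stmt_17 (V : Type) (G : SimpleGraph V) (hG : IsMedianGraph G) :
    (∀ x : V, (G.dist x x : ℝ) = 0) ∧
    (∀ x y : V, (G.dist x y : ℝ) = (G.dist y x : ℝ)) ∧
    (∀ (n : ℕ) (x : Fin n → V) (lam : Fin n → ℝ), (∑ i, lam i) = 0 →
      ∑ i, ∑ j, lam i * lam j * (G.dist (x i) (x j) : ℝ) ≤ 0) := by
  classical
  refine ⟨fun x => by simp, fun x y => by rw [G.dist_comm], fun n x lam hlam => ?_⟩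
  choose F hcard hmem using fun i j => hG.exists_separating_finset (x i) _ (x j) rfl
  let S : Finset (Set V) := Finset.univ.biUnion fun i => Finset.univ.biUnion fun j => F i j
  let e : Set V → Fin n → ℝ := fun H i => if x i ∈ H then 1 else 0
  have hdist : ∀ i j, (G.dist (x i) (x j) : ℝ) = ∑ H ∈ S, e H i * (1 - e H j) := by
    intro i j
    have hsub : F i j = S.filter fun H => x i ∈ H ∧ x j ∉ H := by
      ext H
      simp only [S, Finset.mem_filter, Finset.mem_biUnion, Finset.mem_univ, true_and]
      constructor
      · exact fun h => ⟨⟨i, j, h⟩, ((hmem i j H).1 h).2⟩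
      · rintro ⟨⟨i', j', h⟩, h'⟩
        exact (hmem i j H).2 ⟨((hmem i' j' H).1 h).1, h'⟩
    rw [← hcard i j, hsub, Finset.card_filter, Nat.cast_sum]
    refine Finset.sum_congr rfl fun H _ => ?_
    by_cases h1 : x i ∈ H <;> by_cases h2 : x j ∈ H <;> simp [e, h1, h2]
  have hsum : ∑ i, ∑ j, lam i * lam j * (G.dist (x i) (x j) : ℝ)
      = ∑ H ∈ S, (∑ i, lam i * e H i) * (∑ j, lam j * (1 - e H j)) := by
    simp_rw [hdist, Finset.sum_mul_sum, Finset.mul_sum]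
    rw [Finset.sum_comm (s := S)]
    refine Finset.sum_congr rfl fun i _ => ?_
    rw [Finset.sum_comm (s := S)]
    refine Finset.sum_congr rfl fun j _ => Finset.sum_congr rfl fun H _ => ?_
    ring
  rw [hsum]
  refine Finset.sum_nonpos fun H _ => ?_
  have : ∑ j, lam j * (1 - e H j) = -∑ j, lam j * e H j := by
    simp [mul_sub, Finset.sum_sub_distrib, hlam]
  rw [this]
  nlinarith [sq_nonneg (∑ j, lam j * e H j)]
end
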